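/- Suppose Θ = {θ_1, θ_2}, the edge cost functions ℓ̃_e^θ : ℝ² → ℝ and the toll functions τ̃_e^θ : ℝ² → ℝ are continuously differentiable, and for every edge e ∈ E and all (x, y) ∈ ℝ² (x the θ_1-edge flow, y the θ_2-edge flow): ∂_2 τ̃_e^{θ_1}(x, y) − ∂_1 τ̃_e^{θ_2}(x, y) = ∂_1 ℓ̃_e^{θ_2}(x, y) − ∂_2 ℓ̃_e^{θ_1}(x, y). Then the abstract game associated with the routing game with tolls admits the potential function V_τ(f) = Σ_{e∈E} [ ∫_0^{φ_e^{θ_1}(f)} (ℓ̃_e^{θ_1} + τ̃_e^{θ_1})(u_1, φ_e^{θ_2}(f)) du_1 + ∫_0^{φ_e^{θ_2}(f)} (ℓ̃_e^{θ_2} + τ̃_e^{θ_2})(φ_e^{θ_1}(f), u_2) du_2 − ∫_0^{φ_e^{θ_2}(f)} ∫_0^{φ_e^{θ_1}(f)} ∂_2 (ℓ̃_e^{θ_1} + τ̃_e^{θ_1})(u_1, u_2) du_1 du_2 ]. -/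

import Mathlib

/-!
Work edge by edge and write `L₁ = ℓ₁ + τ₁`, `L₂ = ℓ₂ + τ₂`. The condition on the tolls says exactly
that `∂₂ L₁ = ∂₁ L₂`, so the game with costs `L₁, L₂` has externally symmetric costs. Let
`C(x, y) = ∫₀^y ∫₀^x ∂₂ L₁(u₁, u₂) du₁ du₂` be the correction term in the potential.

* Swapping the integrals and integrating in the second variable gives
  `C(x, y) = ∫₀^x (L₁(u, y) - L₁(u, 0)) du` (`integral_integral_deriv_snd`). Hence `V - U₂` is a sum
  of terms `∫₀^x L₁(u, 0) du`, which do not depend on the flow of player 2.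
* Replacing `∂₂ L₁` by `∂₁ L₂` and integrating in the first variable gives
  `C(x, y) = ∫₀^y (L₂(x, u) - L₂(0, u)) du` (`integral_integral_deriv_fst`). Hence `V - U₁` is a sum
  of terms `∫₀^y L₂(0, u) du`, which do not depend on the flow of player 1.
-/


open MeasureTheory

noncomputable section

namespace RoutingGame

open scoped Classical

variable {E P : Type*}

/-- Edge flow of one type on edge `e` induced by the path flows `g` of that type:
`φ_e = ∑_{p ∈ P : e ∈ p} g_p`. -/
def edgeFlow [Fintype P] (edges : P → Finset E) (g : P → ℝ) (e : E) : ℝ :=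
  ∑ p ∈ Finset.univ.filter (fun p => e ∈ edges p), g p

/-- Utility of player 1 (type `θ₁`) in the abstract game:
`U₁(g,h) = ∑_e ∫_0^{φ_e^{θ₁}} ℓ̃_e^{θ₁}(u, φ_e^{θ₂}) du`. -/
def U1 [Fintype E] [Fintype P] (edges : P → Finset E) (ℓ1 : E → ℝ → ℝ → ℝ)
    (g h : P → ℝ) : ℝ :=
  ∑ e : E, ∫ u in (0:ℝ)..(edgeFlow edges g e), ℓ1 e u (edgeFlow edges h e)

/-- Utility of player 2 (type `θ₂`) in the abstract game:
`U₂(g,h) = ∑_e ∫_0^{φ_e^{θ₂}} ℓ̃_e^{θ₂}(φ_e^{θ₁}, u) du`. -/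
def U2 [Fintype E] [Fintype P] (edges : P → Finset E) (ℓ2 : E → ℝ → ℝ → ℝ)
    (g h : P → ℝ) : ℝ :=
  ∑ e : E, ∫ u in (0:ℝ)..(edgeFlow edges h e), ℓ2 e (edgeFlow edges g e) u

/-- `V` is a potential function for the two-player abstract game associated with
edge cost functions `ℓ1, ℓ2` (arguments of `V`: path flows of type `θ₁`, of type `θ₂`). -/
def IsPotential [Fintype E] [Fintype P] (edges : P → Finset E)
    (ℓ1 ℓ2 : E → ℝ → ℝ → ℝ) (V : (P → ℝ) → (P → ℝ) → ℝ) : Prop :=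
  (∀ g g' h : P → ℝ, V g h - V g' h = U1 edges ℓ1 g h - U1 edges ℓ1 g' h) ∧
  (∀ g h h' : P → ℝ, V g h - V g h' = U2 edges ℓ2 g h - U2 edges ℓ2 g h')

/-- The candidate potential function
`V(f) = ∑_e [∫_0^{φ₁} ℓ₁(u,φ₂) du + ∫_0^{φ₂} ℓ₂(φ₁,u) du − ∫_0^{φ₂}∫_0^{φ₁} ∂₂ℓ₁(u₁,u₂) du₁ du₂]`. -/
def Vpot [Fintype E] [Fintype P] (edges : P → Finset E)
    (ℓ1 ℓ2 : E → ℝ → ℝ → ℝ) (g h : P → ℝ) : ℝ :=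
  ∑ e : E,
    ((∫ u in (0:ℝ)..(edgeFlow edges g e), ℓ1 e u (edgeFlow edges h e)) +
     (∫ u in (0:ℝ)..(edgeFlow edges h e), ℓ2 e (edgeFlow edges g e) u) -
     ∫ u2 in (0:ℝ)..(edgeFlow edges h e),
       ∫ u1 in (0:ℝ)..(edgeFlow edges g e), deriv (fun t => ℓ1 e u1 t) u2)

theorem hasDerivAt_snd {F : ℝ → ℝ → ℝ} (hF : ContDiff ℝ 1 (fun q : ℝ × ℝ => F q.1 q.2))
    (x y : ℝ) :
    HasDerivAt (fun t => F x t) (fderiv ℝ (fun q : ℝ × ℝ => F q.1 q.2) (x, y) (0, 1)) y := by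
  have h : HasFDerivAt (fun q : ℝ × ℝ => F q.1 q.2) _ (x, y) :=
    (hF.differentiable one_ne_zero (x, y)).hasFDerivAt
  exact h.comp_hasDerivAt y ((hasDerivAt_const y x).prodMk (hasDerivAt_id y))

theorem hasDerivAt_fst {F : ℝ → ℝ → ℝ} (hF : ContDiff ℝ 1 (fun q : ℝ × ℝ => F q.1 q.2))
    (x y : ℝ) :
    HasDerivAt (fun t => F t y) (fderiv ℝ (fun q : ℝ × ℝ => F q.1 q.2) (x, y) (1, 0)) x := by
  have h : HasFDerivAt (fun q : ℝ × ℝ => F q.1 q.2) _ (x, y) :=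
    (hF.differentiable one_ne_zero (x, y)).hasFDerivAt
  exact h.comp_hasDerivAt x ((hasDerivAt_id x).prodMk (hasDerivAt_const x y))

theorem continuous_deriv_snd {F : ℝ → ℝ → ℝ}
    (hF : ContDiff ℝ 1 (fun q : ℝ × ℝ => F q.1 q.2)) :
    Continuous (fun q : ℝ × ℝ => deriv (fun t => F q.1 t) q.2) := by
  simp_rw [fun q : ℝ × ℝ => (hasDerivAt_snd hF q.1 q.2).deriv]
  exact (hF.continuous_fderiv one_ne_zero).clm_apply continuous_const

theorem continuous_deriv_fst {F : ℝ → ℝ → ℝ}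
    (hF : ContDiff ℝ 1 (fun q : ℝ × ℝ => F q.1 q.2)) :
    Continuous (fun q : ℝ × ℝ => deriv (fun t => F t q.2) q.1) := by
  simp_rw [fun q : ℝ × ℝ => (hasDerivAt_fst hF q.1 q.2).deriv]
  exact (hF.continuous_fderiv one_ne_zero).clm_apply continuous_const

theorem integral_integral_deriv_snd {F : ℝ → ℝ → ℝ}
    (hF : ContDiff ℝ 1 (fun q : ℝ × ℝ => F q.1 q.2)) (x y : ℝ) :
    (∫ u2 in (0:ℝ)..y, ∫ u1 in (0:ℝ)..x, deriv (fun t => F u1 t) u2) =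
      (∫ u in (0:ℝ)..x, F u y) - ∫ u in (0:ℝ)..x, F u 0 := by
  have hc := continuous_deriv_snd hF
  have hsec (c : ℝ) : Continuous (fun u => F u c) :=
    hF.continuous.comp (by fun_prop : Continuous fun u : ℝ => (u, c))
  have hFTC (u : ℝ) : (∫ v in (0:ℝ)..y, deriv (fun t => F u t) v) = F u y - F u 0 :=
    intervalIntegral.integral_deriv_eq_sub
      (fun v _ => (hasDerivAt_snd hF u v).differentiableAt)
      ((hc.comp (by fun_prop : Continuous fun v : ℝ => (u, v))).intervalIntegrable 0 y)
  rw [intervalIntegral_intervalIntegral_swap]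
  · simp_rw [hFTC]
    exact intervalIntegral.integral_sub ((hsec y).intervalIntegrable 0 x)
      ((hsec 0).intervalIntegrable 0 x)
  · have hcont : Continuous (Function.uncurry fun u2 u1 : ℝ => deriv (fun t => F u1 t) u2) :=
      hc.comp continuous_swap
    exact (hcont.continuousOn.integrableOn_compact (isCompact_uIcc.prod isCompact_uIcc)).mono_set
      (Set.prod_mono Set.uIoc_subset_uIcc Set.uIoc_subset_uIcc)

theorem integral_integral_deriv_fst {F : ℝ → ℝ → ℝ}
    (hF : ContDiff ℝ 1 (fun q : ℝ × ℝ => F q.1 q.2)) (x y : ℝ) :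
    (∫ u2 in (0:ℝ)..y, ∫ u1 in (0:ℝ)..x, deriv (fun t => F t u2) u1) =
      (∫ u in (0:ℝ)..y, F x u) - ∫ u in (0:ℝ)..y, F 0 u := by
  have hsec (c : ℝ) : Continuous (fun u => F c u) :=
    hF.continuous.comp (by fun_prop : Continuous fun u : ℝ => (c, u))
  have hFTC (v : ℝ) : (∫ u in (0:ℝ)..x, deriv (fun t => F t v) u) = F x v - F 0 v :=
    intervalIntegral.integral_deriv_eq_sub
      (fun u _ => (hasDerivAt_fst hF u v).differentiableAt)
      (((continuous_deriv_fst hF).comp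
        (by fun_prop : Continuous fun u : ℝ => (u, v))).intervalIntegrable 0 x)
  simp_rw [hFTC]
  exact intervalIntegral.integral_sub ((hsec x).intervalIntegrable 0 y)
    ((hsec 0).intervalIntegrable 0 y)

/-- Costs with symmetric cross derivatives, `∂₂ L₁ = ∂₁ L₂`, admit the potential `Vpot`. -/
theorem isPotential_of_symm [Fintype E] [Fintype P]
    (edges : P → Finset E) (L1 L2 : E → ℝ → ℝ → ℝ)
    (h1 : ∀ e, ContDiff ℝ 1 (fun q : ℝ × ℝ => L1 e q.1 q.2))
    (h2 : ∀ e, ContDiff ℝ 1 (fun q : ℝ × ℝ => L2 e q.1 q.2))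
    (hsymm : ∀ (e : E) (x y : ℝ), deriv (fun t => L1 e x t) y = deriv (fun t => L2 e t y) x) :
    IsPotential edges L1 L2 (Vpot edges L1 L2) := by
  have hV1 (g h : P → ℝ) : Vpot edges L1 L2 g h =
      U1 edges L1 g h + ∑ e : E, ∫ u in (0:ℝ)..(edgeFlow edges h e), L2 e 0 u := by
    simp only [Vpot, U1, hsymm, ← Finset.sum_add_distrib]
    refine Finset.sum_congr rfl fun e _ => ?_
    rw [integral_integral_deriv_fst (h2 e)]
    ring
  have hV2 (g h : P → ℝ) : Vpot edges L1 L2 g h =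
      U2 edges L2 g h + ∑ e : E, ∫ u in (0:ℝ)..(edgeFlow edges g e), L1 e u 0 := by
    simp only [Vpot, U2, ← Finset.sum_add_distrib]
    refine Finset.sum_congr rfl fun e _ => ?_
    rw [integral_integral_deriv_snd (h1 e)]
    ring
  refine ⟨fun g g' h => ?_, fun g h h' => ?_⟩
  · rw [hV1, hV1]; ring
  · rw [hV2, hV2]; ring

/-- **Proposition 1 (distinguishable types).** With two types, continuously
differentiable edge cost functions `ℓ1, ℓ2` and toll functions `τ1, τ2`, if
`∂₂τ̃_e^{θ₁} − ∂₁τ̃_e^{θ₂} = ∂₁ℓ̃_e^{θ₂} − ∂₂ℓ̃_e^{θ₁}` on every edge, then the abstract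
game of the routing game with tolls (edge costs `ℓ + τ`) admits the corresponding
potential function `Vpot`. -/
theorem tolls_distinguishable {E P : Type*} [Fintype E] [Fintype P]
    (edges : P → Finset E) (ℓ1 ℓ2 τ1 τ2 : E → ℝ → ℝ → ℝ)
    (hℓ1 : ∀ e, ContDiff ℝ 1 (fun q : ℝ × ℝ => ℓ1 e q.1 q.2))
    (hℓ2 : ∀ e, ContDiff ℝ 1 (fun q : ℝ × ℝ => ℓ2 e q.1 q.2))
    (hτ1 : ∀ e, ContDiff ℝ 1 (fun q : ℝ × ℝ => τ1 e q.1 q.2))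
    (hτ2 : ∀ e, ContDiff ℝ 1 (fun q : ℝ × ℝ => τ2 e q.1 q.2))
    (hcond : ∀ (e : E) (x y : ℝ),
      deriv (fun t => τ1 e x t) y - deriv (fun t => τ2 e t y) x =
        deriv (fun t => ℓ2 e t y) x - deriv (fun t => ℓ1 e x t) y) :
    IsPotential edges
      (fun e x y => ℓ1 e x y + τ1 e x y) (fun e x y => ℓ2 e x y + τ2 e x y)
      (Vpot edges
        (fun e x y => ℓ1 e x y + τ1 e x y) (fun e x y => ℓ2 e x y + τ2 e x y)) := by
  refine isPotential_of_symm edges _ _ (fun e => (hℓ1 e).add (hτ1 e))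
    (fun e => (hℓ2 e).add (hτ2 e)) fun e x y => ?_
  have a1 := hasDerivAt_snd (hℓ1 e) x y
  have a2 := hasDerivAt_fst (hℓ2 e) x y
  have b1 := hasDerivAt_snd (hτ1 e) x y
  have b2 := hasDerivAt_fst (hτ2 e) x y
  have hc := hcond e x y
  rw [a1.deriv, a2.deriv, b1.deriv, b2.deriv] at hc
  rw [(a1.fun_add b1).deriv, (a2.fun_add b2).deriv]
  linarith

end RoutingGame
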